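/- (Characterization of implication) For all propositional formulas φ and ψ: if the implication φ → ψ is N-valid, then at least one of the following holds: (1) φ is an atom; (2) φ is a negation (i.e., of the form ¬χ for some formula χ); (3) ψ is N-valid. -/

import Mathlib

/-! ## Dialogical logic: formulas, statements, moves -/

/-- Propositional formulas, built from atoms (indexed by `ℕ`) and `¬`, `∧`, `∨`, `→`. -/
inductive Formula : Type
  | atom : ℕ → Formula
  | neg : Formula → Formula
  | conj : Formula → Formula → Formula
  | disj : Formula → Formula → Formula
  | impl : Formula → Formula → Formula
  deriving DecidableEq, Inhabited

/-- Statements: formulas together with the three symbolic attacks `∧_L`, `∧_R` and `?`. -/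
inductive Statement : Type
  | form : Formula → Statement
  | conjL : Statement  -- the symbolic attack ∧_L
  | conjR : Statement  -- the symbolic attack ∧_R
  | question : Statement   -- the symbolic attack ?
  deriving DecidableEq, Inhabited

/-- A formula is atomic iff it is an atom. -/
def Formula.isAtomic : Formula → Prop
  | .atom _ => True
  | _ => False

/-- A move of a dialogue: a statement together with a reference.  The reference is
`none` for the initial move, `some (m, true)` for an attack on the assertion made at
move `m`, and `some (m, false)` for a defense against the attack made at move `m`. -/
structure Move : Type where
  stmt : Statement
  ref : Option (ℕ × Bool)
  deriving DecidableEq, Inhabited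

/-! ## Particle rules -/

/-- Particle rules, attacks: `Attacks a φ` holds when the statement `a` is an
admissible attack against the assertion `φ`. -/
inductive Attacks : Statement → Formula → Prop
  | conjL (φ ψ : Formula) : Attacks .conjL (.conj φ ψ)
  | conjR (φ ψ : Formula) : Attacks .conjR (.conj φ ψ)
  | disj (φ ψ : Formula) : Attacks .question (.disj φ ψ)
  | impl (φ ψ : Formula) : Attacks (.form φ) (.impl φ ψ)
  | neg (φ : Formula) : Attacks (.form φ) (.neg φ)

/-- Particle rules, defenses: `Defends s a φ` holds when the statement `s` is an
admissible defense of the assertion `φ` against the attack `a`.  (A negation admits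
no defense.) -/
inductive Defends : Statement → Statement → Formula → Prop
  | conjL (φ ψ : Formula) : Defends (.form φ) .conjL (.conj φ ψ)
  | conjR (φ ψ : Formula) : Defends (.form ψ) .conjR (.conj φ ψ)
  | disjL (φ ψ : Formula) : Defends (.form φ) .question (.disj φ ψ)
  | disjR (φ ψ : Formula) : Defends (.form ψ) .question (.disj φ ψ)
  | impl (φ ψ : Formula) : Defends (.form ψ) (.form φ) (.impl φ ψ)

/-! ## Dialogues

A (finite stage of a) dialogue is modelled as a list of moves; the move at index `i`
is the `i`-th move, made by Proponent P if `i` is even and by Opponent O if `i` is odd. -/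

/-- The skeletal dialogue conditions: move 0 is an assertion of a formula with no
reference, and every later move is an attack on, or a defense against, a specified
earlier move of the other player, in accordance with the particle rules; only
non-atomic assertions may be attacked. -/
def IsDialogue (d : List Move) : Prop :=
  (∀ _ : 0 < d.length, d[0]!.ref = none ∧ ∃ φ : Formula, d[0]!.stmt = .form φ) ∧
  (∀ i : ℕ, 0 < i → i < d.length →
    ∃ (m : ℕ) (z : Bool), d[i]!.ref = some (m, z) ∧ m < i ∧ m % 2 ≠ i % 2 ∧
      (z = true →
        ∃ φ : Formula, d[m]!.stmt = .form φ ∧ ¬ φ.isAtomic ∧ Attacks d[i]!.stmt φ) ∧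
      (z = false →
        ∃ (k : ℕ) (φ : Formula), d[m]!.ref = some (k, true) ∧ k < m ∧
          d[k]!.stmt = .form φ ∧ Defends d[i]!.stmt d[m]!.stmt φ))

/-- Rule D10: P may assert an atomic formula only if O has asserted it earlier. -/
def RuleD10 (d : List Move) : Prop :=
  ∀ i < d.length, i % 2 = 0 → ∀ a : ℕ, d[i]!.stmt = .form (.atom a) →
    ∃ j < i, j % 2 = 1 ∧ d[j]!.stmt = .form (.atom a)

/-- Rule D13: each P-assertion may be attacked at most once. -/
def RuleD13 (d : List Move) : Prop :=
  ∀ m : ℕ, m % 2 = 0 → ∀ i < d.length, ∀ j < d.length,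
    d[i]!.ref = some (m, true) → d[j]!.ref = some (m, true) → i = j

/-- Rule E: O may only react (attack or defend) against the immediately preceding
P-move. -/
def RuleE (d : List Move) : Prop :=
  ∀ i < d.length, i % 2 = 1 → ∃ z : Bool, d[i]!.ref = some (i - 1, z)

/-- The rule set N = {D10, D13}. -/
def NRules (d : List Move) : Prop := RuleD10 d ∧ RuleD13 d

/-- The rule set CL = {D10, D13, E}. -/
def CLRules (d : List Move) : Prop := RuleD10 d ∧ RuleD13 d ∧ RuleE d

/-- A dialogue commences with `φ` when its initial move is P's assertion of `φ`. -/
def CommencesWith (φ : Formula) (d : List Move) : Prop :=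
  0 < d.length ∧ d[0]!.stmt = .form φ

/-- An `S`-dialogue for `φ` (for a rule set `S`): a dialogue commencing with `φ`
that obeys the structural rules `S`.  These are exactly the branches (identified
with their underlying move sequences) of the `S`-dialogue tree for `φ`. -/
def SDialogueFor (S : List Move → Prop) (φ : Formula) (d : List Move) : Prop :=
  IsDialogue d ∧ S d ∧ CommencesWith φ d

/-- P wins a finite `S`-dialogue for `φ`: it ends with a P-move (the last index,
`d.length - 1`, is even, i.e. `d.length` is odd) and it cannot be extended by any
legal further (O-)move. -/
def WinsFor (S : List Move → Prop) (φ : Formula) (d : List Move) : Prop :=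
  SDialogueFor S φ d ∧ d.length % 2 = 1 ∧ ∀ m : Move, ¬ SDialogueFor S φ (d ++ [m])

/-- An `S`-winning strategy for P for `φ`, modelled as a set `T` of `S`-dialogues for
`φ`: the nodes of a rooted subtree of the `S`-dialogue tree for `φ`, each node being
identified with the dialogue leading from the root to it.  The conditions state that
`T` is a nonempty, prefix-closed set of `S`-dialogues for `φ` (hence a rooted subtree
of the `S`-dialogue tree with the same root), that every branch of `T` is a finite
`S`-dialogue won by P (leaves are wins for P, and there is no infinite branch), that
every node at odd depth (an O-move) has exactly one child, and that every node at
even depth (a P-move) has the same children in `T` as in the full dialogue tree. -/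
structure IsWinningStrategy (S : List Move → Prop) (φ : Formula) (T : Set (List Move)) : Prop where
  nonempty : T.Nonempty
  dialogues : ∀ d ∈ T, SDialogueFor S φ d
  prefix_closed : ∀ d ∈ T, ∀ e : List Move, e <+: d → 0 < e.length → e ∈ T
  leaf_wins : ∀ d ∈ T, (∀ m : Move, d ++ [m] ∉ T) → WinsFor S φ d
  no_infinite_branch : ∀ f : ℕ → Move, ∃ n : ℕ, 0 < n ∧ (List.ofFn fun i : Fin n => f i) ∉ T
  odd_unique_child : ∀ d ∈ T, 0 < d.length → d.length % 2 = 0 → ∃! m : Move, d ++ [m] ∈ T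
  even_all_children : ∀ d ∈ T, d.length % 2 = 1 →
    ∀ m : Move, SDialogueFor S φ (d ++ [m]) → d ++ [m] ∈ T

/-- `φ` is `S`-valid iff P has an `S`-winning strategy for `φ`. -/
def SValid (S : List Move → Prop) (φ : Formula) : Prop :=
  ∃ T : Set (List Move), IsWinningStrategy S φ T

/-- `φ` is N-valid (`⊨_N φ`) iff P has an N-winning strategy for `φ`. -/
def NValid (φ : Formula) : Prop := SValid NRules φ

/-!
Suppose `φ` is neither an atom nor a negation and let O attack `φ → ψ` by asserting `φ`. If P ever
attacked this assertion, O could repeat one defense against that attack forever, since no rule of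
`N` limits defenses. A winning P therefore never touches `φ` and can only defend with `ψ`, possibly
several times; nor does the assertion of `φ` license any atom. So P's win can be replayed in a
dialogue for `ψ`: whenever P repeats `ψ`, let O repeat its first attack on it, and identify the
repeated moves with the original ones.
-/

theorem getElem!_eq_of_isPrefix {α : Type*} [Inhabited α] {l l' : List α} (h : l <+: l') {i : ℕ}
    (hi : i < l.length) : l'[i]! = l[i]! := by
  rw [getElem!_pos l i hi, getElem!_pos l' i (hi.trans_le h.length_le), h.getElem hi]

theorem getElem!_append_singleton_of_lt {α : Type*} [Inhabited α] {l : List α} {i : ℕ}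
    (hi : i < l.length) (x : α) : (l ++ [x])[i]! = l[i]! :=
  getElem!_eq_of_isPrefix (List.prefix_append l [x]) hi

theorem getElem!_append_singleton_length {α : Type*} [Inhabited α] (l : List α) (x : α) :
    (l ++ [x])[l.length]! = x := by
  simp

theorem ofFn_succ_eq_append_singleton {α : Type*} (f : ℕ → α) (n : ℕ) :
    (List.ofFn fun i : Fin (n + 1) ↦ f i) = (List.ofFn fun i : Fin n ↦ f i) ++ [f n] := by
  rw [List.ofFn_succ_last]; rfl

/-- The initial move of a dialogue commencing with `χ`. -/
def initialMove (χ : Formula) : Move := ⟨.form χ, none⟩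

theorem SDialogueFor.ne_nil {S : List Move → Prop} {χ : Formula} {d : List Move}
    (h : SDialogueFor S χ d) : d ≠ [] :=
  List.ne_nil_of_length_pos h.2.2.1

theorem SDialogueFor.getElem!_zero {S : List Move → Prop} {χ : Formula} {d : List Move}
    (h : SDialogueFor S χ d) : d[0]! = initialMove χ := by
  obtain ⟨hd, -, hpos, hstmt⟩ := h
  rw [initialMove, ← hstmt, ← (hd.1 hpos).1]

section Winning

variable {S : List Move → Prop} {χ : Formula} {σ τ : List Move → Move} {d : List Move}

/-- `WinsFrom S χ σ d`: from the position `d`, in which P has just moved, P wins by answering every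
O-move with the reply function `σ` applied to the resulting dialogue. Being inductive, it also says
that every play following `σ` terminates. -/
inductive WinsFrom (S : List Move → Prop) (χ : Formula) (σ : List Move → Move) : List Move → Prop
  | intro (d : List Move) (legal : SDialogueFor S χ d)
      (wins : ∀ m, SDialogueFor S χ (d ++ [m]) →
        WinsFrom S χ σ (d ++ [m] ++ [σ (d ++ [m])])) :
      WinsFrom S χ σ d

theorem WinsFrom.legal (h : WinsFrom S χ σ d) : SDialogueFor S χ d := by
  cases h with
  | intro _ legal _ => exact legal

theorem WinsFrom.reply (h : WinsFrom S χ σ d) {m : Move} (hm : SDialogueFor S χ (d ++ [m])) :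
    WinsFrom S χ σ (d ++ [m] ++ [σ (d ++ [m])]) := by
  cases h with
  | intro _ _ wins => exact wins m hm

theorem WinsFrom.congr (h : WinsFrom S χ σ d) (hστ : ∀ e, d <+: e → σ e = τ e) :
    WinsFrom S χ τ d := by
  induction h with
  | intro d legal _ ih =>
    refine .intro d legal fun m hm ↦ ?_
    rw [← hστ _ (List.prefix_append _ _)]
    refine ih m hm fun e he ↦ hστ e (.trans ?_ he)
    rw [List.append_assoc]
    exact List.prefix_append _ _

/-- P can force a win from the position `d`, in which P has just moved. -/
def IsWinning (S : List Move → Prop) (χ : Formula) (d : List Move) : Prop :=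
  ∃ σ, WinsFrom S χ σ d

theorem isWinning_of_forall_exists_reply (hd : SDialogueFor S χ d)
    (h : ∀ m, SDialogueFor S χ (d ++ [m]) → ∃ r, IsWinning S χ (d ++ [m] ++ [r])) :
    IsWinning S χ d := by
  choose! r σ hσ using h
  let τ (e : List Move) : Move :=
    if e.length = d.length + 1 then r e[d.length]! else σ e[d.length]! e
  refine ⟨τ, .intro d hd fun m hm ↦ ?_⟩
  have hτ : τ (d ++ [m]) = r m := by simp [τ]
  rw [hτ]
  refine (hσ m hm).congr fun e he ↦ ?_
  have hlen : d.length + 2 ≤ e.length := by simpa using he.length_le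
  have hget : e[d.length]! = m := by simp [getElem!_eq_of_isPrefix he]
  simp only [τ, hget]
  rw [if_neg (by lia)]

/-- The dialogues for `χ` that arise when P follows the reply function `σ`. -/
inductive IsPlay (S : List Move → Prop) (χ : Formula) (σ : List Move → Move) : List Move → Prop
  | initial : IsPlay S χ σ [initialMove χ]
  | opponent {d : List Move} {m : Move} : IsPlay S χ σ d → d.length % 2 = 1 →
      SDialogueFor S χ (d ++ [m]) → IsPlay S χ σ (d ++ [m])
  | proponent {d : List Move} : IsPlay S χ σ d → d.length % 2 = 0 → IsPlay S χ σ (d ++ [σ d])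

theorem isPlay_append_singleton_iff (hd : d ≠ []) {m : Move} :
    IsPlay S χ σ (d ++ [m]) ↔ IsPlay S χ σ d ∧
      (d.length % 2 = 1 → SDialogueFor S χ (d ++ [m])) ∧ (d.length % 2 = 0 → m = σ d) := by
  constructor
  · generalize he : d ++ [m] = e
    rintro (_ | ⟨hplay, hodd, hm⟩ | ⟨hplay, heven⟩)
    · cases List.append_singleton_inj.1 (he.trans (List.nil_append _).symm) with
      | intro h _ => exact absurd h hd
    · obtain ⟨rfl, rfl⟩ := List.append_singleton_inj.1 he
      exact ⟨hplay, fun _ ↦ hm, by lia⟩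
    · obtain ⟨rfl, rfl⟩ := List.append_singleton_inj.1 he
      exact ⟨hplay, by lia, fun _ ↦ rfl⟩
  · rintro ⟨hplay, hodd, heven⟩
    rcases Nat.mod_two_eq_zero_or_one d.length with h | h
    · rw [heven h]
      exact hplay.proponent h
    · exact hplay.opponent h (hodd h)

theorem IsPlay.of_isPrefix (h : IsPlay S χ σ d) {e : List Move} (he : e <+: d) (hne : e ≠ []) :
    IsPlay S χ σ e := by
  induction h with
  | initial =>
    rcases List.prefix_concat_iff.1 (show e <+: [] ++ [_] from he) with rfl | he
    · exact .initial
    · exact absurd (List.prefix_nil.1 he) hne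
  | opponent hplay hodd hm ih =>
    rcases List.prefix_concat_iff.1 he with rfl | he
    · exact hplay.opponent hodd hm
    · exact ih he
  | proponent hplay heven ih =>
    rcases List.prefix_concat_iff.1 he with rfl | he
    · exact hplay.proponent heven
    · exact ih he

theorem WinsFrom.of_isPlay (h : WinsFrom S χ σ [initialMove χ]) (hd : IsPlay S χ σ d) :
    (d.length % 2 = 1 → WinsFrom S χ σ d) ∧
      (d.length % 2 = 0 → SDialogueFor S χ d ∧ WinsFrom S χ σ (d ++ [σ d])) := by
  induction hd with
  | initial => exact ⟨fun _ ↦ h, by simp⟩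
  | opponent _ hodd hm ih =>
    refine ⟨fun h ↦ ?_, fun _ ↦ ⟨hm, (ih.1 hodd).reply hm⟩⟩
    rw [List.length_append, List.length_singleton] at h
    lia
  | proponent _ heven ih =>
    refine ⟨fun _ ↦ (ih.2 heven).2, fun h ↦ ?_⟩
    rw [List.length_append, List.length_singleton] at h
    lia

theorem WinsFrom.legal_of_isPlay (h : WinsFrom S χ σ [initialMove χ]) (hd : IsPlay S χ σ d) :
    SDialogueFor S χ d := by
  rcases Nat.mod_two_eq_zero_or_one d.length with hmod | hmod
  · exact ((h.of_isPlay hd).2 hmod).1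
  · exact ((h.of_isPlay hd).1 hmod).legal

theorem WinsFrom.exists_not_isPlay (h : WinsFrom S χ σ d) {f : ℕ → Move} {n : ℕ}
    (hn : n % 2 = 1) (hf : (List.ofFn fun i : Fin n ↦ f i) = d) :
    ∃ k > 0, ¬ IsPlay S χ σ (List.ofFn fun i : Fin k ↦ f i) := by
  induction h generalizing n with
  | intro d legal _ ih =>
    by_contra! hplay
    have hlen : d.length = n := by rw [← hf, List.length_ofFn]
    have hO : IsPlay S χ σ (d ++ [f n]) := by
      simpa only [ofFn_succ_eq_append_singleton, hf] using hplay (n + 1) (by lia)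
    have hP : IsPlay S χ σ (d ++ [f n] ++ [f (n + 1)]) := by
      simpa only [ofFn_succ_eq_append_singleton, hf] using hplay (n + 2) (by lia)
    have hm := ((isPlay_append_singleton_iff legal.ne_nil).1 hO).2.1 (by lia)
    have hreply : f (n + 1) = σ (d ++ [f n]) :=
      ((isPlay_append_singleton_iff (by simp)).1 hP).2.2 (by simp; lia)
    obtain ⟨k, hk, hnot⟩ := ih (f n) hm (n := n + 2) (by lia) (by
      simp only [ofFn_succ_eq_append_singleton, hf, hreply])
    exact hnot (hplay k hk)

theorem WinsFrom.isWinningStrategy (h : WinsFrom S χ σ [initialMove χ]) :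
    IsWinningStrategy S χ {d | IsPlay S χ σ d} where
  nonempty := ⟨_, .initial⟩
  dialogues _ hd := h.legal_of_isPlay hd
  prefix_closed _ hd _ he hpos := hd.of_isPrefix he (List.ne_nil_of_length_pos hpos)
  leaf_wins d hd hleaf := by
    have hodd : d.length % 2 = 1 := by
      by_contra heven
      exact hleaf _ (hd.proponent (by lia))
    exact ⟨h.legal_of_isPlay hd, hodd, fun m hm ↦ hleaf m (hd.opponent hodd hm)⟩
  no_infinite_branch f := by
    by_contra! hplay
    have hf : f 0 = initialMove χ := by
      simpa using (h.legal_of_isPlay (hplay 1 one_pos)).getElem!_zero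
    obtain ⟨n, hn, hnot⟩ := h.exists_not_isPlay (f := f) (n := 1) rfl (by simp [hf])
    exact hnot (hplay n hn)
  odd_unique_child d hd hpos heven :=
    ⟨σ d, hd.proponent heven, fun _ hm ↦
      ((isPlay_append_singleton_iff (List.ne_nil_of_length_pos hpos)).1 hm).2.2 heven⟩
  even_all_children _ hd hodd _ hm := hd.opponent hodd hm

theorem ofFn_isPrefix_of_chain {α : Type*} [Inhabited α] {g : ℕ → List α}
    (hg : ∀ n, g n <+: g (n + 1)) (hlen : ∀ n, n ≤ (g n).length) (n : ℕ) :
    (List.ofFn fun i : Fin n ↦ (g (i + 1))[(i : ℕ)]!) <+: g n := by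
  have mono (m k : ℕ) (h : m ≤ k) : g m <+: g k :=
    Nat.le_induction List.prefix_rfl (fun k _ ih ↦ ih.trans (hg k)) k h
  refine List.prefix_iff_getElem.2 ⟨by simpa using hlen n, fun i hi ↦ ?_⟩
  rw [List.length_ofFn] at hi
  have hi' : i < (g (i + 1)).length := hlen (i + 1)
  simp only [List.getElem_ofFn]
  rw [getElem!_pos (g (i + 1)) i hi', (mono (i + 1) n hi).getElem hi']

theorem IsWinningStrategy.wellFounded {T : Set (List Move)} (hT : IsWinningStrategy S χ T) :
    WellFounded fun e d : List Move ↦ e ∈ T ∧ d <+: e ∧ d.length < e.length := by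
  rw [wellFounded_iff_isEmpty_descending_chain]
  refine ⟨fun ⟨g, hg⟩ ↦ ?_⟩
  have hlen (n : ℕ) : n ≤ (g n).length := by
    induction n with
    | zero => exact Nat.zero_le _
    | succ n ih => exact ih.trans_lt (hg n).2.2
  obtain ⟨n, hn, hnot⟩ := hT.no_infinite_branch fun i ↦ (g (i + 1))[i]!
  have hmem : g n ∈ T := by
    obtain ⟨k, rfl⟩ := Nat.exists_eq_add_one.2 hn
    exact (hg k).1
  exact hnot (hT.prefix_closed _ hmem _ (ofFn_isPrefix_of_chain (fun n ↦ (hg n).2.1) hlen n)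
    (by simpa using hn))

theorem IsWinningStrategy.isWinning {T : Set (List Move)} (hT : IsWinningStrategy S χ T)
    (hd : d ∈ T) (hodd : d.length % 2 = 1) : IsWinning S χ d := by
  induction d using hT.wellFounded.induction with
  | _ d ih =>
    refine isWinning_of_forall_exists_reply (hT.dialogues d hd) fun m hm ↦ ?_
    have hdm := hT.even_all_children d hd hodd m hm
    obtain ⟨r, hr, -⟩ := hT.odd_unique_child _ hdm (by simp) (by simp; lia)
    exact ⟨r, ih _ ⟨hr, by simp [List.append_assoc], by simp⟩ hr (by simp; lia)⟩

theorem IsWinningStrategy.initial_mem {T : Set (List Move)} (hT : IsWinningStrategy S χ T) :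
    [initialMove χ] ∈ T := by
  obtain ⟨d, hd⟩ := hT.nonempty
  have hlegal := hT.dialogues d hd
  obtain ⟨x, t, rfl⟩ := List.exists_cons_of_ne_nil hlegal.ne_nil
  obtain rfl : x = initialMove χ := hlegal.getElem!_zero
  exact hT.prefix_closed _ hd _ ⟨t, rfl⟩ (by simp)

theorem sValid_iff_isWinning : SValid S χ ↔ IsWinning S χ [initialMove χ] :=
  ⟨fun ⟨_, hT⟩ ↦ hT.isWinning hT.initial_mem rfl, fun ⟨_, hσ⟩ ↦ ⟨_, hσ.isWinningStrategy⟩⟩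

end Winning

section Legality

variable {χ : Formula} {d : List Move} {x : Move}

/-- The statement `s` is an admissible attack on the assertion made at move `m` of `d`. -/
def AttacksAt (d : List Move) (s : Statement) (m : ℕ) : Prop :=
  ∃ φ : Formula, d[m]!.stmt = .form φ ∧ ¬ φ.isAtomic ∧ Attacks s φ

/-- The statement `s` is an admissible defense against the attack made at move `m` of `d`. -/
def DefendsAt (d : List Move) (s : Statement) (m : ℕ) : Prop :=
  ∃ (k : ℕ) (φ : Formula), d[m]!.ref = some (k, true) ∧ k < m ∧
    d[k]!.stmt = .form φ ∧ Defends s d[m]!.stmt φ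

/-- The move `x`, played at position `n`, reacts to an earlier move of `d` by the other player in
accordance with the particle rules; only the moves of `d` before position `n` matter. -/
def IsReaction (d : List Move) (n : ℕ) (x : Move) : Prop :=
  ∃ (m : ℕ) (z : Bool), x.ref = some (m, z) ∧ m < n ∧ m % 2 ≠ n % 2 ∧
    (z = true → AttacksAt d x.stmt m) ∧ (z = false → DefendsAt d x.stmt m)

theorem attacksAt_append_singleton_iff {m : ℕ} (hm : m < d.length) {s : Statement} :
    AttacksAt (d ++ [x]) s m ↔ AttacksAt d s m := by
  rw [AttacksAt, AttacksAt, getElem!_append_singleton_of_lt hm]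

theorem defendsAt_append_singleton_iff {m : ℕ} (hm : m < d.length) {s : Statement} :
    DefendsAt (d ++ [x]) s m ↔ DefendsAt d s m := by
  rw [DefendsAt, DefendsAt, getElem!_append_singleton_of_lt hm]
  refine exists₂_congr fun k φ ↦ and_congr_right fun _ ↦ and_congr_right fun hk ↦ ?_
  rw [getElem!_append_singleton_of_lt (hk.trans hm)]

theorem isReaction_append_singleton_iff {n : ℕ} (hn : n ≤ d.length) {y : Move} :
    IsReaction (d ++ [x]) n y ↔ IsReaction d n y := by
  refine exists₂_congr fun m z ↦ and_congr_right fun _ ↦ and_congr_right fun hm ↦ ?_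
  rw [attacksAt_append_singleton_iff (hm.trans_le hn),
    defendsAt_append_singleton_iff (hm.trans_le hn)]

theorem isDialogue_append_singleton_iff (hd : d ≠ []) :
    IsDialogue (d ++ [x]) ↔ IsDialogue d ∧ IsReaction d d.length x := by
  have hpos := List.length_pos_of_ne_nil hd
  have initial : (d ++ [x])[0]! = d[0]! := getElem!_append_singleton_of_lt hpos x
  have later (i : ℕ) (hi : i < d.length) :
      IsReaction (d ++ [x]) i (d ++ [x])[i]! ↔ IsReaction d i d[i]! := by
    rw [isReaction_append_singleton_iff hi.le, getElem!_append_singleton_of_lt hi]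
  have last : IsReaction (d ++ [x]) d.length (d ++ [x])[d.length]! ↔ IsReaction d d.length x := by
    rw [isReaction_append_singleton_iff le_rfl, getElem!_append_singleton_length]
  have hlen : (d ++ [x]).length = d.length + 1 := by simp
  constructor
  · rintro ⟨h0, h⟩
    exact ⟨⟨fun _ ↦ initial ▸ h0 (by lia), fun i hi hid ↦ (later i hid).1 (h i hi (by lia))⟩,
      last.1 (h _ hpos (by lia))⟩
  · rintro ⟨⟨h0, h⟩, hx⟩
    refine ⟨fun _ ↦ initial ▸ h0 hpos, fun i hi hid ↦ ?_⟩
    rcases Nat.lt_succ_iff_lt_or_eq.1 (hlen ▸ hid) with hlt | rfl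
    · exact (later i hlt).2 (h i hi hlt)
    · exact last.2 hx

theorem ruleD10_append_singleton_iff :
    RuleD10 (d ++ [x]) ↔ RuleD10 d ∧ (d.length % 2 = 0 → ∀ a, x.stmt = .form (.atom a) →
      ∃ j < d.length, j % 2 = 1 ∧ d[j]!.stmt = .form (.atom a)) := by
  have asserted_iff (i : ℕ) (hi : i ≤ d.length) (a : ℕ) :
      (∃ j < i, j % 2 = 1 ∧ (d ++ [x])[j]!.stmt = .form (.atom a)) ↔
        ∃ j < i, j % 2 = 1 ∧ d[j]!.stmt = .form (.atom a) := by
    refine exists_congr fun j ↦ and_congr_right fun hj ↦ ?_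
    rw [getElem!_append_singleton_of_lt (hj.trans_le hi)]
  rw [RuleD10, List.length_append, List.length_singleton, Nat.forall_lt_succ_right,
    getElem!_append_singleton_length]
  refine and_congr (forall₂_congr fun i hi ↦ ?_) ?_
  · simp only [getElem!_append_singleton_of_lt hi, asserted_iff i hi.le]
  · simp only [asserted_iff d.length le_rfl]

theorem ruleD13_append_singleton_iff :
    RuleD13 (d ++ [x]) ↔ RuleD13 d ∧ ∀ m, m % 2 = 0 → x.ref = some (m, true) →
      ∀ i < d.length, d[i]!.ref ≠ some (m, true) := by
  have hlen : (d ++ [x]).length = d.length + 1 := by simp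
  have old (i : ℕ) (hi : i < d.length) : (d ++ [x])[i]! = d[i]! :=
    getElem!_append_singleton_of_lt hi x
  have new : (d ++ [x])[d.length]! = x := getElem!_append_singleton_length d x
  constructor
  · refine fun h ↦ ⟨fun m hm i hi j hj hi' hj' ↦ ?_, fun m hm hx i hi hi' ↦ ?_⟩
    · exact h m hm i (by lia) j (by lia) (by rwa [old i hi]) (by rwa [old j hj])
    · exact hi.ne (h m hm i (by lia) d.length (by lia) (by rwa [old i hi]) (by rwa [new]))
  · rintro ⟨h, hx⟩ m hm i hi j hj hi' hj'
    rcases Nat.lt_succ_iff_lt_or_eq.1 (hlen ▸ hi) with hi | rfl <;>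
      rcases Nat.lt_succ_iff_lt_or_eq.1 (hlen ▸ hj) with hj | rfl
    · rw [old i hi] at hi'
      rw [old j hj] at hj'
      exact h m hm i hi j hj hi' hj'
    · rw [old i hi] at hi'
      rw [new] at hj'
      exact absurd hi' (hx m hm hj' i hi)
    · rw [new] at hi'
      rw [old j hj] at hj'
      exact absurd hj' (hx m hm hi' j hj)
    · rfl

theorem nDialogueFor_append_singleton_iff (hd : d ≠ []) :
    SDialogueFor NRules χ (d ++ [x]) ↔ SDialogueFor NRules χ d ∧ IsReaction d d.length x ∧
      (d.length % 2 = 0 → ∀ a, x.stmt = .form (.atom a) →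
        ∃ j < d.length, j % 2 = 1 ∧ d[j]!.stmt = .form (.atom a)) ∧
      ∀ m, m % 2 = 0 → x.ref = some (m, true) → ∀ i < d.length, d[i]!.ref ≠ some (m, true) := by
  have hpos := List.length_pos_of_ne_nil hd
  have hcommences : CommencesWith χ (d ++ [x]) ↔ CommencesWith χ d := by
    simp only [CommencesWith, getElem!_append_singleton_of_lt hpos, hpos, List.length_append,
      Nat.add_pos_left hpos]
  rw [SDialogueFor, SDialogueFor, NRules, NRules, isDialogue_append_singleton_iff hd,
    ruleD10_append_singleton_iff, ruleD13_append_singleton_iff, hcommences]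
  tauto

theorem SDialogueFor.append_opponent (h : SDialogueFor NRules χ d) (hodd : d.length % 2 = 1)
    (hx : IsReaction d d.length x)
    (hfresh : ∀ m, x.ref = some (m, true) → ∀ i < d.length, d[i]!.ref ≠ some (m, true)) :
    SDialogueFor NRules χ (d ++ [x]) :=
  (nDialogueFor_append_singleton_iff h.ne_nil).2 ⟨h, hx, by lia, fun m _ ↦ hfresh m⟩

theorem SDialogueFor.append_proponent (h : SDialogueFor NRules χ d) (heven : d.length % 2 = 0)
    (hx : IsReaction d d.length x)
    (hatom : ∀ a, x.stmt = .form (.atom a) →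
      ∃ j < d.length, j % 2 = 1 ∧ d[j]!.stmt = .form (.atom a)) :
    SDialogueFor NRules χ (d ++ [x]) := by
  refine (nDialogueFor_append_singleton_iff h.ne_nil).2 ⟨h, hx, fun _ ↦ hatom, fun m hm hxm ↦ ?_⟩
  obtain ⟨_, _, hr, -, hpar, -⟩ := hx
  cases hr.symm.trans hxm
  lia

theorem nDialogueFor_initialMove (hχ : ¬ χ.isAtomic) : SDialogueFor NRules χ [initialMove χ] := by
  refine ⟨⟨fun _ ↦ ⟨rfl, χ, rfl⟩, fun i hi hi' ↦ ?_⟩, ⟨fun i hi _ a ha ↦ ?_, ?_⟩, one_pos, rfl⟩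
  · exact absurd hi' (not_lt.2 hi)
  · obtain rfl := Nat.lt_one_iff.1 hi
    cases ha
    exact absurd trivial hχ
  · intro m _ i hi j hj _ _
    exact (Nat.lt_one_iff.1 hi).trans (Nat.lt_one_iff.1 hj).symm

theorem IsDialogue.isReaction (h : IsDialogue d) {i m : ℕ} {z : Bool} (hi : i < d.length)
    (hr : d[i]!.ref = some (m, z)) : IsReaction d i d[i]! := by
  refine h.2 i (Nat.pos_of_ne_zero ?_) hi
  rintro rfl
  cases (h.1 hi).1.symm.trans hr

theorem IsDialogue.ref_lt (h : IsDialogue d) {i m : ℕ} {z : Bool} (hi : i < d.length)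
    (hr : d[i]!.ref = some (m, z)) : m < i := by
  obtain ⟨_, _, hr', hlt, -⟩ := h.isReaction hi hr
  cases hr'.symm.trans hr
  exact hlt

theorem IsDialogue.attacksAt (h : IsDialogue d) {i m : ℕ} (hi : i < d.length)
    (hr : d[i]!.ref = some (m, true)) : AttacksAt d d[i]!.stmt m := by
  obtain ⟨_, _, hr', -, -, hattack, -⟩ := h.isReaction hi hr
  cases hr'.symm.trans hr
  exact hattack rfl

end Legality

section Attack

theorem Attacks.exists_defends {s : Statement} {φ : Formula} (h : Attacks s φ)
    (hneg : ∀ θ, φ ≠ .neg θ) : ∃ t, Defends t s φ := by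
  cases h with
  | conjL φ ψ => exact ⟨_, .conjL φ ψ⟩
  | conjR φ ψ => exact ⟨_, .conjR φ ψ⟩
  | disj φ ψ => exact ⟨_, .disjL φ ψ⟩
  | impl φ ψ => exact ⟨_, .impl φ ψ⟩
  | neg θ => exact absurd rfl (hneg θ)

variable {χ φ : Formula} {σ : List Move → Move} {d : List Move}

theorem not_winsFrom_of_attack {i j : ℕ} (hneg : ∀ θ, φ ≠ .neg θ) (hodd : d.length % 2 = 1)
    (hφ : d[i]!.stmt = .form φ) (hj : j < d.length) (heven : j % 2 = 0)
    (hr : d[j]!.ref = some (i, true)) : ¬ WinsFrom NRules χ σ d := by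
  intro h
  induction h with
  | intro d legal _ ih =>
    have hij : i < j := legal.1.ref_lt hj hr
    obtain ⟨φ', hφ', -, hattack⟩ := legal.1.attacksAt hj hr
    cases hφ'.symm.trans hφ
    obtain ⟨t, ht⟩ := hattack.exists_defends hneg
    have hdefense : SDialogueFor NRules χ (d ++ [⟨t, some (j, false)⟩]) :=
      legal.append_opponent hodd
        ⟨j, false, rfl, hj, by lia, by simp, fun _ ↦ ⟨i, _, hr, hij, hφ, ht⟩⟩ (by simp)
    have hext (k : ℕ) (hk : k < d.length) (r : Move) :
        (d ++ [⟨t, some (j, false)⟩] ++ [r])[k]! = d[k]! :=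
      getElem!_eq_of_isPrefix (by simp [List.append_assoc]) hk
    refine ih _ hdefense (by simp; lia) ?_ (by simp; lia) ?_
    · rwa [hext i (hij.trans hj)]
    · rwa [hext j hj]

end Attack

section Collapse

variable {φ ψ : Formula} {g : ℕ → ℕ} {d e : List Move}

/-- Move `i` of the dialogue `e` stands for the move `x`, played at position `j` of another dialogue
whose positions are translated by `g`: it makes the same statement with the translated reference,
except that the assertion of `ψ` opening `e` may stand for a defense against move 1. -/
structure Represents (g : ℕ → ℕ) (e : List Move) (i : ℕ) (x : Move) (j : ℕ) : Prop where
  lt : i < e.length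
  mod_two : i % 2 = j % 2
  stmt : e[i]!.stmt = x.stmt
  ref : (x.ref = some (1, false) ∧ e[i]!.ref = none) ∨
    ∃ m z, 2 ≤ m ∧ m < j ∧ x.ref = some (m, z) ∧ e[i]!.ref = some (g m, z)

theorem Represents.congr {f : ℕ → ℕ} {i j : ℕ} {x : Move} (h : Represents g e i x j)
    (hfg : ∀ m < j, f m = g m) : Represents f e i x j where
  lt := h.lt
  mod_two := h.mod_two
  stmt := h.stmt
  ref := h.ref.imp_right fun ⟨m, z, hm, hmj, hx, he⟩ ↦ ⟨m, z, hm, hmj, hx, by rwa [hfg m hmj]⟩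

theorem Represents.of_isPrefix {e' : List Move} {i j : ℕ} {x : Move} (h : Represents g e i x j)
    (he : e <+: e') : Represents g e' i x j := by
  have hget : e'[i]! = e[i]! := getElem!_eq_of_isPrefix he h.lt
  exact ⟨h.lt.trans_le he.length_le, h.mod_two, hget ▸ h.stmt, hget ▸ h.ref⟩

/-- The dialogue `e` for `ψ` is obtained from the dialogue `d` for `φ → ψ`, in which O attacks with
`φ` at move 1, by dropping the first two moves and identifying moves that repeat each other;
`g` sends the positions of `d` to those of `e`. -/
structure IsCollapse (φ ψ : Formula) (g : ℕ → ℕ) (d e : List Move) : Prop where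
  source : SDialogueFor NRules (φ.impl ψ) d
  target : SDialogueFor NRules ψ e
  attack : d[1]!.stmt = .form φ
  surjOn : Set.SurjOn g (Set.Ico 2 d.length) (Set.Iio e.length)
  represents : ∀ j ∈ Set.Ico 2 d.length, Represents g e (g j) d[j]! j

namespace IsCollapse

theorem two_lt_length (h : IsCollapse φ ψ g d e) : 2 < d.length := by
  obtain ⟨j, hj, -⟩ := h.surjOn (Set.mem_Iio.2 h.target.2.2.1)
  exact hj.1.trans_lt hj.2

theorem extend (h : IsCollapse φ ψ g d e) {x : Move} {e' : List Move} {i : ℕ}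
    (hd : SDialogueFor NRules (φ.impl ψ) (d ++ [x])) (he : SDialogueFor NRules ψ e')
    (hpre : e <+: e') (hcover : ∀ k < e'.length, k < e.length ∨ k = i)
    (hx : Represents g e' i x d.length) :
    IsCollapse φ ψ (Function.update g d.length i) (d ++ [x]) e' := by
  have hlen : (d ++ [x]).length = d.length + 1 := by simp
  have hold {m : ℕ} (hm : m < d.length) : Function.update g d.length i m = g m :=
    Function.update_of_ne hm.ne _ _
  have hnew : Function.update g d.length i d.length = i := Function.update_self ..
  have htwo := h.two_lt_length
  refine ⟨hd, he, ?_, fun k hk ↦ ?_, fun j hj ↦ ?_⟩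
  · rw [getElem!_append_singleton_of_lt (by lia)]
    exact h.attack
  · rcases hcover k hk with hk | rfl
    · obtain ⟨j, hj, rfl⟩ := h.surjOn hk
      exact ⟨j, ⟨hj.1, hlen ▸ hj.2.trans (Nat.lt_succ_self _)⟩, hold hj.2⟩
    · exact ⟨d.length, ⟨htwo.le, hlen ▸ Nat.lt_succ_self _⟩, hnew⟩
  · rcases Nat.lt_succ_iff_lt_or_eq.1 (hlen ▸ hj.2) with hlt | rfl
    · rw [hold hlt, getElem!_append_singleton_of_lt hlt]
      exact ((h.represents j ⟨hj.1, hlt⟩).of_isPrefix hpre).congr fun m hm ↦ hold (hm.trans hlt)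
    · rw [hnew, getElem!_append_singleton_length]
      exact hx.congr fun m hm ↦ hold hm

theorem extend_source (h : IsCollapse φ ψ g d e) {x : Move} {i : ℕ}
    (hd : SDialogueFor NRules (φ.impl ψ) (d ++ [x])) (hx : Represents g e i x d.length) :
    IsCollapse φ ψ (Function.update g d.length i) (d ++ [x]) e :=
  h.extend hd h.target List.prefix_rfl (fun _ ↦ Or.inl) hx

theorem extend_both (h : IsCollapse φ ψ g d e) {s : Statement} {j : ℕ} {z : Bool}
    (hpar : d.length % 2 = e.length % 2) (hj : j ∈ Set.Ico 2 d.length)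
    (hd : SDialogueFor NRules (φ.impl ψ) (d ++ [⟨s, some (j, z)⟩]))
    (he : SDialogueFor NRules ψ (e ++ [⟨s, some (g j, z)⟩])) :
    IsCollapse φ ψ (Function.update g d.length e.length)
      (d ++ [⟨s, some (j, z)⟩]) (e ++ [⟨s, some (g j, z)⟩]) := by
  refine h.extend hd he (List.prefix_append _ _) (fun k hk ↦ ?_) ⟨by simp, hpar.symm, ?_, ?_⟩
  · rwa [List.length_append, List.length_singleton, Nat.lt_succ_iff_lt_or_eq] at hk
  · rw [getElem!_append_singleton_length]
  · rw [getElem!_append_singleton_length]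
    exact .inr ⟨j, z, hj.1, hj.2, rfl, rfl⟩

theorem attacksAt_iff (h : IsCollapse φ ψ g d e) {s : Statement} {j : ℕ}
    (hj : j ∈ Set.Ico 2 d.length) : AttacksAt e s (g j) ↔ AttacksAt d s j := by
  rw [AttacksAt, AttacksAt, (h.represents j hj).stmt]

theorem defendsAt_iff (h : IsCollapse φ ψ g d e) {s : Statement} {j : ℕ}
    (hj : j ∈ Set.Ico 2 d.length) : DefendsAt e s (g j) ↔ DefendsAt d s j := by
  have hrep := h.represents j hj
  rw [DefendsAt, DefendsAt, hrep.stmt]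
  rcases hrep.ref with ⟨hd, he⟩ | ⟨m, z, hm, hmj, hd, he⟩
  · rw [hd, he]
    simp
  · have hstmt := (h.represents m ⟨hm, hmj.trans hj.2⟩).stmt
    have hlt := h.target.1.ref_lt hrep.lt he
    rw [hd, he]
    constructor
    · rintro ⟨_, χ, ⟨⟩, -, hχ, hs⟩
      exact ⟨m, χ, rfl, hmj, hstmt ▸ hχ, hs⟩
    · rintro ⟨_, χ, ⟨⟩, -, hχ, hs⟩
      exact ⟨g m, χ, rfl, hlt, hstmt ▸ hχ, hs⟩

theorem isReaction_iff (h : IsCollapse φ ψ g d e) {s : Statement} {j : ℕ} {z : Bool}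
    (hpar : d.length % 2 = e.length % 2) (hj : j ∈ Set.Ico 2 d.length) :
    IsReaction e e.length ⟨s, some (g j, z)⟩ ↔ IsReaction d d.length ⟨s, some (j, z)⟩ := by
  have hrep := h.represents j hj
  constructor
  · rintro ⟨_, _, ⟨⟩, -, hne, hattack, hdefense⟩
    exact ⟨j, z, rfl, hj.2, by rwa [← hrep.mod_two, hpar],
      fun hz ↦ (h.attacksAt_iff hj).1 (hattack hz), fun hz ↦ (h.defendsAt_iff hj).1 (hdefense hz)⟩
  · rintro ⟨_, _, ⟨⟩, -, hne, hattack, hdefense⟩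
    exact ⟨g j, z, rfl, hrep.lt, by rwa [hrep.mod_two, ← hpar],
      fun hz ↦ (h.attacksAt_iff hj).2 (hattack hz), fun hz ↦ (h.defendsAt_iff hj).2 (hdefense hz)⟩

theorem exists_opponent_move (h : IsCollapse φ ψ g d e) (hd : d.length % 2 = 1)
    (he : e.length % 2 = 1) {y : Move} (hy : SDialogueFor NRules ψ (e ++ [y])) :
    ∃ x g', IsCollapse φ ψ g' (d ++ [x]) (e ++ [y]) := by
  obtain ⟨-, hreact, -, hfresh⟩ := (nDialogueFor_append_singleton_iff h.target.ne_nil).1 hy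
  obtain ⟨s, r⟩ := y
  obtain ⟨_, z, ⟨⟩, hlt, hne, -⟩ := id hreact
  obtain ⟨j, hj, rfl⟩ := h.surjOn hlt
  have hpar : d.length % 2 = e.length % 2 := hd.trans he.symm
  refine ⟨_, _, h.extend_both hpar hj (h.source.append_opponent hd
    ((h.isReaction_iff hpar hj).1 hreact) fun m hm i hi hir ↦ ?_) hy⟩
  cases hm
  have hji : j < i := h.source.1.ref_lt hi hir
  have hrep := h.represents i ⟨hj.1.trans hji.le, hi⟩
  rcases hrep.ref with ⟨hd', -⟩ | ⟨_, _, -, -, hd', he'⟩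
  · cases hd'.symm.trans hir
  · cases hd'.symm.trans hir
    exact hfresh (g j) (by lia) rfl (g i) hrep.lt he'

theorem exists_proponent_move (h : IsCollapse φ ψ g d e) (hφ : ¬ φ.isAtomic)
    (hd : d.length % 2 = 0) (he : e.length % 2 = 0) {x : Move}
    (hx : SDialogueFor NRules (φ.impl ψ) (d ++ [x])) (hx1 : ∀ z, x.ref ≠ some (1, z)) :
    ∃ y g', IsCollapse φ ψ g' (d ++ [x]) (e ++ [y]) := by
  obtain ⟨-, hreact, hatom, -⟩ := (nDialogueFor_append_singleton_iff h.source.ne_nil).1 hx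
  obtain ⟨s, r⟩ := x
  obtain ⟨j, z, ⟨⟩, hlt, hne, -⟩ := id hreact
  have hj1 : j ≠ 1 := by
    rintro rfl
    exact hx1 z rfl
  have hj : j ∈ Set.Ico 2 d.length := ⟨by lia, hlt⟩
  have hpar : d.length % 2 = e.length % 2 := hd.trans he.symm
  refine ⟨_, _, h.extend_both hpar hj hx (h.target.append_proponent he
    ((h.isReaction_iff hpar hj).2 hreact) fun a ha ↦ ?_)⟩
  obtain ⟨i, hi, hodd, hia⟩ := hatom hd a ha
  have hi1 : i ≠ 1 := by
    rintro rfl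
    cases hia.symm.trans h.attack
    exact hφ trivial
  have hrep := h.represents i ⟨by lia, hi⟩
  exact ⟨g i, hrep.lt, hrep.mod_two.trans hodd, hrep.stmt.trans hia⟩

end IsCollapse

end Collapse

section Implication

theorem Formula.isAtomic_iff (φ : Formula) : φ.isAtomic ↔ ∃ a, φ = .atom a := by
  cases φ <;> simp [Formula.isAtomic]

variable {φ ψ : Formula} {g : ℕ → ℕ} {d e : List Move}

theorem SDialogueFor.ref_one (h : SDialogueFor NRules ψ e) (he : 1 < e.length) :
    e[1]!.ref = some (0, true) := by
  obtain ⟨m, z, hr, hm, -, -, hdefense⟩ := h.1.2 1 one_pos he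
  obtain rfl := Nat.lt_one_iff.1 hm
  cases z with
  | true => exact hr
  | false =>
    obtain ⟨_, _, -, hk, -⟩ := hdefense rfl
    exact absurd hk (Nat.not_lt_zero _)

theorem SDialogueFor.stmt_of_defendsAt_one (h : SDialogueFor NRules (φ.impl ψ) d) {s : Statement}
    (hs : DefendsAt d s 1) : s = .form ψ := by
  obtain ⟨k, χ, -, hk, hstmt, hdefends⟩ := hs
  obtain rfl := Nat.lt_one_iff.1 hk
  rw [h.getElem!_zero] at hstmt
  cases hstmt
  generalize d[1]!.stmt = t at hdefends
  cases hdefends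
  rfl

theorem WinsFrom.eq_of_ref_one {σ : List Move → Move} {x : Move} {z : Bool}
    (h : WinsFrom NRules (φ.impl ψ) σ (d ++ [x])) (hneg : ∀ θ, φ ≠ .neg θ) (hd : d.length % 2 = 0)
    (hattack : d[1]!.stmt = .form φ) (hr : x.ref = some (1, z)) :
    x = ⟨.form ψ, some (1, false)⟩ := by
  have hne : d ≠ [] := by
    rintro rfl
    cases (congrArg Move.ref h.legal.getElem!_zero).symm.trans hr
  obtain ⟨hlegal, ⟨_, _, hr', hone, -, -, hdefense⟩, -⟩ :=
    (nDialogueFor_append_singleton_iff hne).1 h.legal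
  cases hr'.symm.trans hr
  cases z with
  | false =>
    obtain ⟨s, r⟩ := x
    cases hlegal.stmt_of_defendsAt_one (hdefense rfl)
    cases hr
    rfl
  | true =>
    refine absurd h (not_winsFrom_of_attack hneg (by simp; lia) (i := 1) (j := d.length) ?_
      (by simp) hd ?_)
    · rwa [getElem!_append_singleton_of_lt hone]
    · rwa [getElem!_append_singleton_length]

theorem IsCollapse.exists_repetition (h : IsCollapse φ ψ g d e) (hd : d.length % 2 = 0)
    (he : e.length % 2 = 0)
    (hx : SDialogueFor NRules (φ.impl ψ) (d ++ [⟨.form ψ, some (1, false)⟩])) :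
    ∃ y g', IsCollapse φ ψ g' (d ++ [⟨.form ψ, some (1, false)⟩] ++ [y]) e := by
  have hpos : 0 < e.length := h.target.2.2.1
  have he1 : 1 < e.length := by lia
  have hlen : (d ++ [⟨.form ψ, some (1, false)⟩] : List Move).length = d.length + 1 := by simp
  have hassert : Represents g e 0 ⟨.form ψ, some (1, false)⟩ d.length := by
    refine ⟨hpos, hd.symm, ?_, .inl ⟨rfl, ?_⟩⟩ <;> rw [h.target.getElem!_zero] <;> rfl
  have hcopy := h.extend_source hx hassert
  have href : e[1]!.ref = some (0, true) := h.target.ref_one he1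
  have hmem : d.length ∈ Set.Ico 2 (d ++ [(⟨.form ψ, some (1, false)⟩ : Move)]).length :=
    ⟨h.two_lt_length.le, hlen ▸ Nat.lt_succ_self _⟩
  have hattack := (hcopy.attacksAt_iff hmem).1 (by
    rw [Function.update_self]
    exact h.target.1.attacksAt he1 href)
  refine ⟨⟨e[1]!.stmt, some (d.length, true)⟩, _, hcopy.extend_source
    (hx.append_opponent (by lia) ⟨d.length, true, rfl, hmem.2, by lia, fun _ ↦ hattack, by simp⟩
      fun m hm i hi hir ↦ ?_)
    ⟨he1, by lia, rfl, .inr ⟨d.length, true, hmem.1, hmem.2, rfl, ?_⟩⟩⟩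
  · cases hm
    have := hx.1.ref_lt hi hir
    lia
  · rw [Function.update_self, href]

theorem IsCollapse.isWinning (h : IsCollapse φ ψ g d e) (hd : d.length % 2 = 1)
    (he : e.length % 2 = 1)
    (hreply : ∀ x f e', IsCollapse φ ψ f (d ++ [x]) e' → e'.length % 2 = 0 →
      ∃ r, IsWinning NRules ψ (e' ++ [r])) : IsWinning NRules ψ e := by
  refine isWinning_of_forall_exists_reply h.target fun y hy ↦ ?_
  obtain ⟨x, f, hxy⟩ := h.exists_opponent_move hd he hy
  exact hreply x f _ hxy (by simp; lia)

theorem WinsFrom.exists_reply_of_isCollapse {σ : List Move → Move} (hφ : ¬ φ.isAtomic)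
    (hneg : ∀ θ, φ ≠ .neg θ) (hwin : WinsFrom NRules (φ.impl ψ) σ d) (hd : d.length % 2 = 1)
    {m : Move} (h : IsCollapse φ ψ g (d ++ [m]) e) (he : e.length % 2 = 0) :
    ∃ r, IsWinning NRules ψ (e ++ [r]) := by
  induction hwin generalizing m g e with
  | intro d _ wins ih =>
    have hwin := wins m h.source
    have hodd : (d ++ [m] ++ [σ (d ++ [m])]).length % 2 = 1 := by simp; lia
    have heven : (d ++ [m]).length % 2 = 0 := by simp; lia
    have ih {y f e'} := @ih m h.source f e' hodd y
    by_cases hr : ∃ z, (σ (d ++ [m])).ref = some (1, z)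
    · obtain ⟨z, hr⟩ := hr
      have hrepeat := hwin.eq_of_ref_one hneg heven h.attack hr
      obtain ⟨y, f, hy⟩ := h.exists_repetition heven he (hrepeat ▸ hwin.legal)
      exact ih (hrepeat ▸ hy) he
    · obtain ⟨y, f, hy⟩ := h.exists_proponent_move hφ heven he hwin.legal (not_exists.1 hr)
      exact ⟨y, hy.isWinning hodd (by simp; lia) fun _ _ _ ↦ ih⟩

theorem isCollapse_initial (hψ : ¬ ψ.isAtomic)
    (h : SDialogueFor NRules (φ.impl ψ)
      [initialMove (φ.impl ψ), ⟨.form φ, some (0, true)⟩, ⟨.form ψ, some (1, false)⟩]) :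
    IsCollapse φ ψ (fun _ ↦ 0)
      [initialMove (φ.impl ψ), ⟨.form φ, some (0, true)⟩, ⟨.form ψ, some (1, false)⟩]
      [initialMove ψ] where
  source := h
  target := nDialogueFor_initialMove hψ
  attack := rfl
  surjOn := fun _ hk ↦ ⟨2, by simp, (Nat.lt_one_iff.1 hk).symm⟩
  represents := fun j hj ↦ by
    obtain rfl : j = 2 := le_antisymm (Nat.le_of_lt_succ hj.2) hj.1
    exact ⟨one_pos, rfl, rfl, .inl ⟨rfl, rfl⟩⟩

theorem WinsFrom.exists_winsFrom_defense {σ : List Move → Move} (hneg : ∀ θ, φ ≠ .neg θ)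
    (h : WinsFrom NRules (φ.impl ψ) σ [initialMove (φ.impl ψ)]) :
    WinsFrom NRules (φ.impl ψ) σ
      [initialMove (φ.impl ψ), ⟨.form φ, some (0, true)⟩, ⟨.form ψ, some (1, false)⟩] := by
  have hattack : SDialogueFor NRules (φ.impl ψ)
      ([initialMove (φ.impl ψ)] ++ [⟨.form φ, some (0, true)⟩]) := by
    refine h.legal.append_opponent rfl ⟨0, true, rfl, one_pos, by simp,
      fun _ ↦ ⟨_, rfl, id, .impl φ ψ⟩, by simp⟩ fun m _ i hi ↦ ?_
    obtain rfl := Nat.lt_one_iff.1 hi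
    exact Option.some_ne_none _ |>.symm
  have hwin := h.reply hattack
  obtain ⟨m, z, hr, hlt, hne, -⟩ :=
    ((nDialogueFor_append_singleton_iff (by simp)).1 hwin.legal).2.1
  simp only [List.length_append, List.length_singleton] at hlt hne
  obtain rfl : m = 1 := by lia
  rw [hwin.eq_of_ref_one hneg (by simp) rfl hr] at hwin
  exact hwin

theorem nValid_of_nValid_impl (hφ : ¬ φ.isAtomic) (hneg : ∀ θ, φ ≠ .neg θ)
    (h : NValid (φ.impl ψ)) : NValid ψ := by
  obtain ⟨σ, hσ⟩ := sValid_iff_isWinning.1 h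
  have hwin := hσ.exists_winsFrom_defense hneg
  have hψ : ¬ ψ.isAtomic := by
    intro hatom
    obtain ⟨a, rfl⟩ := ψ.isAtomic_iff.1 hatom
    obtain ⟨j, hj, hodd, hja⟩ := hwin.legal.2.1.1 2 (by simp) rfl a rfl
    obtain rfl : j = 1 := by lia
    cases hja
    exact hφ trivial
  have hcollapse := isCollapse_initial hψ hwin.legal
  exact sValid_iff_isWinning.2 (hcollapse.isWinning (by simp) rfl fun _ _ _ ↦
    hwin.exists_reply_of_isCollapse hφ hneg (by simp))

end Implication

/-- **Characterization of implication.** If `φ → ψ` is N-valid, then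
`φ` is an atom, or `φ` is a negation, or `ψ` is N-valid. -/
theorem characterization_of_implication (φ ψ : Formula)
    (h : NValid (Formula.impl φ ψ)) :
    (∃ a : ℕ, φ = Formula.atom a) ∨ (∃ χ : Formula, φ = Formula.neg χ) ∨ NValid ψ := by
  by_contra! ⟨hatom, hneg, hψ⟩
  exact hψ (nValid_of_nValid_impl (φ.isAtomic_iff.not.2 (not_exists.2 hatom)) hneg h)
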